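/- For each fixed u ∈ S_n, the set {x^{u,v} : v ∈ S_n} of monomials is a basis of the zero-weight space of the quantum matrix bialgebra A(n; q) as a free Z[q^{1/2}, q^{-1/2}]-module. -/

import Mathlib

noncomputable section

attribute [local instance] Classical.propDecidable

/-- The adjacent transposition `s_{i+1}` swapping `i` and `i+1` in `S_{n+1}`. -/
def adjT {n : ℕ} (i : Fin n) : Equiv.Perm (Fin (n + 1)) :=
  Equiv.swap i.castSucc i.succ

/-- Coxeter length: minimal number of adjacent transpositions whose product is `w`. -/
def len {m : ℕ} (w : Equiv.Perm (Fin m)) : ℕ :=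
  sInf {k | ∃ l : List (Equiv.Perm (Fin m)), l.length = k ∧
    (∀ s ∈ l, ∃ p : Fin m × Fin m, (p.1 : ℕ) + 1 = (p.2 : ℕ) ∧ s = Equiv.swap p.1 p.2) ∧
    l.prod = w}

/-- Product of the word of generators given by a list of indices. -/
def wordProd {n : ℕ} (l : List (Fin n)) : Equiv.Perm (Fin (n + 1)) :=
  (l.map adjT).prod

/-- `l` is a reduced word for `w`. -/
def IsRedWord {n : ℕ} (l : List (Fin n)) (w : Equiv.Perm (Fin (n + 1))) : Prop :=
  wordProd l = w ∧ l.length = len w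

/-- Bruhat order. -/
def BruhatLE {n : ℕ} (u v : Equiv.Perm (Fin (n + 1))) : Prop :=
  ∀ l : List (Fin n), IsRedWord l v → ∃ l' : List (Fin n), l'.Sublist l ∧ IsRedWord l' u

/-- Left weak order. -/
def WeakLE {n : ℕ} (t u : Equiv.Perm (Fin (n + 1))) : Prop :=
  len u = len (u * t⁻¹) + len t

/-- The base ring `ℤ[q^{1/2}, q^{-1/2}]`, with `T 1 = q^{1/2}`. -/
abbrev A := LaurentPolynomial ℤ

def qh : A := LaurentPolynomial.T 1
def qhi : A := LaurentPolynomial.T (-1)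
def qq : A := LaurentPolynomial.T 2

/-- Relations of the quantum matrix bialgebra `A(m;q)`. -/
inductive QRel (m : ℕ) : FreeAlgebra A (Fin m × Fin m) → FreeAlgebra A (Fin m × Fin m) → Prop
  | r1 (i k l : Fin m) (h : k < l) :
      QRel m (FreeAlgebra.ι A (i, l) * FreeAlgebra.ι A (i, k))
        (algebraMap A _ qh * (FreeAlgebra.ι A (i, k) * FreeAlgebra.ι A (i, l)))
  | r2 (i j k : Fin m) (h : i < j) :
      QRel m (FreeAlgebra.ι A (j, k) * FreeAlgebra.ι A (i, k))
        (algebraMap A _ qh * (FreeAlgebra.ι A (i, k) * FreeAlgebra.ι A (j, k)))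
  | r3 (i j k l : Fin m) (hij : i < j) (hkl : k < l) :
      QRel m (FreeAlgebra.ι A (j, k) * FreeAlgebra.ι A (i, l))
        (FreeAlgebra.ι A (i, l) * FreeAlgebra.ι A (j, k))
  | r4 (i j k l : Fin m) (hij : i < j) (hkl : k < l) :
      QRel m (FreeAlgebra.ι A (j, l) * FreeAlgebra.ι A (i, k))
        (FreeAlgebra.ι A (i, k) * FreeAlgebra.ι A (j, l) +
          algebraMap A _ (qh - qhi) * (FreeAlgebra.ι A (i, l) * FreeAlgebra.ι A (j, k)))

/-- The quantum matrix bialgebra `A(m;q)`. -/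
abbrev Qmb (m : ℕ) := RingQuot (QRel m)

/-- The generator `x_{i,j}` of the quantum matrix bialgebra. -/
def Xg {m : ℕ} (i j : Fin m) : Qmb m :=
  RingQuot.mkAlgHom A (QRel m) (FreeAlgebra.ι A (i, j))

/-- The zero-weight-space monomial `x^{u,v} = x_{u(1),v(1)} ⋯ x_{u(m),v(m)}`. -/
def xm {m : ℕ} (u v : Equiv.Perm (Fin m)) : Qmb m :=
  (List.ofFn fun k : Fin m => Xg (u k) (v k)).prod


set_option linter.unusedSimpArgs false

/-- Abstract representation data for `r` rows and columns `C`. -/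
theorem repr_exists {R : Type} [CommRing R] (p p' : R) (hp : p * p' = 1)
    (C : Type) [LinearOrder C] (r : ℕ) :
    ∃ (M : Type) (_ : AddCommGroup M) (_ : Module R M) (X : Fin r → C → M →ₗ[R] M)
      (vac : M) (D : (Fin r → C) → M →ₗ[R] R),
      (∀ i k l x, X i k (X i l x) = 0) ∧
      (∀ i j k x, i < j → X j k (X i k x) = p • X i k (X j k x)) ∧
      (∀ i j k l x, i < j → k < l → X j k (X i l x) = X i l (X j k x)) ∧
      (∀ i j k l x, i < j → k < l →
        X j l (X i k x) = X i k (X j l x) + (p - p') • X i l (X j k x)) ∧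
      (∀ c d, D d ((List.ofFn fun i => X i (c i)).prod vac) = if c = d then 1 else 0) := by
  induction r with
  | zero =>
    refine ⟨R, inferInstance, inferInstance, fun i => i.elim0, 1, fun _ => LinearMap.id,
      fun i => i.elim0, fun i => i.elim0, fun i => i.elim0, fun i => i.elim0, ?_⟩
    intro c d
    simp [Subsingleton.elim c d]
  | succ r ih =>
    obtain ⟨M, i1, i2, X, vac, D, h1, h2, h3, h4, hD⟩ := ih
    let Y : Fin r → C → (C →₀ M) →ₗ[R] (C →₀ M) := fun i j =>
      Finsupp.lsum R (fun b => (if j = b then p else 1) • (Finsupp.lsingle b ∘ₗ X i j)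
        + (if b < j then (p - p') else 0) • (Finsupp.lsingle j ∘ₗ X i b))
    have hY : ∀ i j b x, Y i j (Finsupp.single b x) =
        (if j = b then p else 1) • Finsupp.single b (X i j x)
        + (if b < j then (p - p') else 0) • Finsupp.single j (X i b x) := by
      intro i j b x
      simp only [Y, Finsupp.lsum_single, LinearMap.add_apply, LinearMap.smul_apply,
        LinearMap.comp_apply, Finsupp.lsingle_apply]
    let X' : Fin (r+1) → C → (M × (C →₀ M)) →ₗ[R] (M × (C →₀ M)) := fun i =>
      Fin.cases (fun j => LinearMap.inr R M (C →₀ M) ∘ₗ Finsupp.lsingle j ∘ₗ LinearMap.fst R M (C →₀ M))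
        (fun i j => (X i j).prodMap (Y i j)) i
    have hX0 : ∀ j x, X' 0 j x = (0, Finsupp.single j x.1) := fun j x => rfl
    have hXs : ∀ i j x, X' (Fin.succ i) j x = (X i j x.1, Y i j x.2) := fun i j x => rfl
    -- relations for Y
    have y1 : ∀ i k l x, Y i k (Y i l x) = 0 := by
      intro i k l x
      induction x using Finsupp.induction_linear with
      | zero => simp
      | add f g hf hg => simp [hf, hg]
      | single b x =>
        simp only [hY, map_add, map_smul, h1, Finsupp.single_zero, smul_zero, add_zero]
    have y2 : ∀ i j k x, i < j → Y j k (Y i k x) = p • Y i k (Y j k x) := by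
      intro i j k x hij
      induction x using Finsupp.induction_linear with
      | zero => simp
      | add f g hf hg => simp [hf, hg]
      | single b x =>
        rcases lt_trichotomy b k with hb | rfl | hb
        · simp only [hY, map_add, map_smul, hb, hb.ne, hb.ne', hb.not_gt,  lt_irrefl, if_true, if_false, one_smul, zero_smul, add_zero]
          simp only [h2, h3, h4, hij, hb, hb.ne, hb.ne', hb.not_gt,  Finsupp.single_add, ← Finsupp.smul_single]
          all_goals (match_scalars <;> grind)
        · simp only [hY, map_add, map_smul,  lt_irrefl, if_true, if_false, one_smul, zero_smul, add_zero]
          simp only [h2, h3, h4, hij,  Finsupp.single_add, ← Finsupp.smul_single]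
          all_goals (match_scalars <;> grind)
        · simp only [hY, map_add, map_smul, hb, hb.ne, hb.ne', hb.not_gt,  lt_irrefl, if_true, if_false, one_smul, zero_smul, add_zero]
          simp only [h2, h3, h4, hij, hb, hb.ne, hb.ne', hb.not_gt,  Finsupp.single_add, ← Finsupp.smul_single]
          all_goals (match_scalars <;> grind)
    have y3 : ∀ i j k l x, i < j → k < l → Y j k (Y i l x) = Y i l (Y j k x) := by
      intro i j k l x hij hkl
      induction x using Finsupp.induction_linear with
      | zero => simp
      | add f g hf hg => simp [hf, hg]
      | single b x =>
        rcases lt_trichotomy b k with hb | rfl | hb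
        · have hc := hb.trans hkl
          simp only [hY, map_add, map_smul, hb, hb.ne, hb.ne', hb.not_gt, hc, hc.ne, hc.ne', hc.not_gt, hkl, hkl.ne, hkl.ne', hkl.not_gt,  lt_irrefl, if_true, if_false, one_smul, zero_smul, add_zero]
          simp only [h2, h3, h4, hij, hb, hb.ne, hb.ne', hb.not_gt, hc, hc.ne, hc.ne', hc.not_gt, hkl, hkl.ne, hkl.ne', hkl.not_gt,  Finsupp.single_add, ← Finsupp.smul_single]
          all_goals (match_scalars <;> grind)
        · simp only [hY, map_add, map_smul, hkl, hkl.ne, hkl.ne', hkl.not_gt,  lt_irrefl, if_true, if_false, one_smul, zero_smul, add_zero]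
          simp only [h2, h3, h4, hij, hkl, hkl.ne, hkl.ne', hkl.not_gt,  Finsupp.single_add, ← Finsupp.smul_single]
          all_goals (match_scalars <;> grind)
        · rcases lt_trichotomy b l with hc | rfl | hc
          · simp only [hY, map_add, map_smul, hb, hb.ne, hb.ne', hb.not_gt, hc, hc.ne, hc.ne', hc.not_gt, hkl, hkl.ne, hkl.ne', hkl.not_gt,  lt_irrefl, if_true, if_false, one_smul, zero_smul, add_zero]
            simp only [h2, h3, h4, hij, hb, hb.ne, hb.ne', hb.not_gt, hc, hc.ne, hc.ne', hc.not_gt, hkl, hkl.ne, hkl.ne', hkl.not_gt,  Finsupp.single_add, ← Finsupp.smul_single]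
            all_goals (match_scalars <;> grind)
          · simp only [hY, map_add, map_smul, hkl, hkl.ne, hkl.ne', hkl.not_gt,  lt_irrefl, if_true, if_false, one_smul, zero_smul, add_zero]
            simp only [h2, h3, h4, hij, hkl, hkl.ne, hkl.ne', hkl.not_gt,  Finsupp.single_add, ← Finsupp.smul_single]
            all_goals (match_scalars <;> grind)
          · simp only [hY, map_add, map_smul, hb, hb.ne, hb.ne', hb.not_gt, hc, hc.ne, hc.ne', hc.not_gt, hkl, hkl.ne, hkl.ne', hkl.not_gt,  lt_irrefl, if_true, if_false, one_smul, zero_smul, add_zero]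
            simp only [h2, h3, h4, hij, hb, hb.ne, hb.ne', hb.not_gt, hc, hc.ne, hc.ne', hc.not_gt, hkl, hkl.ne, hkl.ne', hkl.not_gt,  Finsupp.single_add, ← Finsupp.smul_single]
            all_goals (match_scalars <;> grind)
    have y4 : ∀ i j k l x, i < j → k < l →
        Y j l (Y i k x) = Y i k (Y j l x) + (p - p') • Y i l (Y j k x) := by
      intro i j k l x hij hkl
      induction x using Finsupp.induction_linear with
      | zero => simp
      | add f g hf hg => simp only [map_add, hf, hg, smul_add]; abel
      | single b x =>
        rcases lt_trichotomy b k with hb | rfl | hb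
        · have hc := hb.trans hkl
          simp only [hY, map_add, map_smul, hb, hb.ne, hb.ne', hb.not_gt, hc, hc.ne, hc.ne', hc.not_gt, hkl, hkl.ne, hkl.ne', hkl.not_gt,  lt_irrefl, if_true, if_false, one_smul, zero_smul, add_zero]
          simp only [h2, h3, h4, hij, hb, hb.ne, hb.ne', hb.not_gt, hc, hc.ne, hc.ne', hc.not_gt, hkl, hkl.ne, hkl.ne', hkl.not_gt,  Finsupp.single_add, ← Finsupp.smul_single]
          all_goals (match_scalars <;> grind)
        · simp only [hY, map_add, map_smul, hkl, hkl.ne, hkl.ne', hkl.not_gt,  lt_irrefl, if_true, if_false, one_smul, zero_smul, add_zero]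
          simp only [h2, h3, h4, hij, hkl, hkl.ne, hkl.ne', hkl.not_gt,  Finsupp.single_add, ← Finsupp.smul_single]
          all_goals (match_scalars <;> grind)
        · rcases lt_trichotomy b l with hc | rfl | hc
          · simp only [hY, map_add, map_smul, hb, hb.ne, hb.ne', hb.not_gt, hc, hc.ne, hc.ne', hc.not_gt, hkl, hkl.ne, hkl.ne', hkl.not_gt,  lt_irrefl, if_true, if_false, one_smul, zero_smul, add_zero]
            simp only [h2, h3, h4, hij, hb, hb.ne, hb.ne', hb.not_gt, hc, hc.ne, hc.ne', hc.not_gt, hkl, hkl.ne, hkl.ne', hkl.not_gt,  Finsupp.single_add, ← Finsupp.smul_single]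
            all_goals (match_scalars <;> grind)
          · simp only [hY, map_add, map_smul, hkl, hkl.ne, hkl.ne', hkl.not_gt,  lt_irrefl, if_true, if_false, one_smul, zero_smul, add_zero]
            simp only [h2, h3, h4, hij, hkl, hkl.ne, hkl.ne', hkl.not_gt,  Finsupp.single_add, ← Finsupp.smul_single]
            all_goals (match_scalars <;> grind)
          · simp only [hY, map_add, map_smul, hb, hb.ne, hb.ne', hb.not_gt, hc, hc.ne, hc.ne', hc.not_gt, hkl, hkl.ne, hkl.ne', hkl.not_gt,  lt_irrefl, if_true, if_false, one_smul, zero_smul, add_zero]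
            simp only [h2, h3, h4, hij, hb, hb.ne, hb.ne', hb.not_gt, hc, hc.ne, hc.ne', hc.not_gt, hkl, hkl.ne, hkl.ne', hkl.not_gt,  Finsupp.single_add, ← Finsupp.smul_single]
            all_goals (match_scalars <;> grind)
    refine ⟨M × (C →₀ M), inferInstance, inferInstance, X', (vac, 0),
      fun c => D (Fin.tail c) ∘ₗ Finsupp.lapply (c 0) ∘ₗ LinearMap.snd R M (C →₀ M),
      ?_, ?_, ?_, ?_, ?_⟩
    · intro i k l x
      induction i using Fin.cases with
      | zero => simp [hX0]
      | succ i => simp [hXs, h1, y1]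
    · intro i j k x hij
      induction j using Fin.cases with
      | zero => simp at hij
      | succ j =>
        induction i using Fin.cases with
        | zero => simp [hX0, hXs, hY]
        | succ i =>
          have hij' : i < j := by simpa using hij
          simp [hXs, h2 _ _ _ _ hij', y2 _ _ _ _ hij']
    · intro i j k l x hij hkl
      induction j using Fin.cases with
      | zero => simp at hij
      | succ j =>
        induction i using Fin.cases with
        | zero => simp [hX0, hXs, hY, hkl.ne, hkl.le]
        | succ i =>
          have hij' : i < j := by simpa using hij
          simp [hXs, h3 _ _ _ _ _ hij' hkl, y3 _ _ _ _ _ hij' hkl]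
    · intro i j k l x hij hkl
      induction j using Fin.cases with
      | zero => simp at hij
      | succ j =>
        induction i using Fin.cases with
        | zero => simp [hX0, hXs, hY, hkl.ne', hkl]
        | succ i =>
          have hij' : i < j := by simpa using hij
          simp [hXs, h4 _ _ _ _ _ hij' hkl, y4 _ _ _ _ _ hij' hkl]
    · intro c d
      have key : ∀ (l : List (Fin r × C)) (x : M),
          (l.map fun a => X' a.1.succ a.2).prod (x, 0) = ((l.map fun a => X a.1 a.2).prod x, 0) := by
        intro l x
        induction l with
        | nil => simp
        | cons a l ih => simp [ih, hXs]
      have key2 := key (List.ofFn fun i => (i, c i.succ)) vac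
      simp only [List.map_ofFn, Function.comp_def] at key2
      rw [List.ofFn_succ, List.prod_cons, Module.End.mul_apply, key2, hX0]
      simp only [LinearMap.comp_apply, LinearMap.snd_apply, Finsupp.lapply_apply]
      by_cases h0 : c 0 = d 0
      · rw [h0, Finsupp.single_eq_same]
        have := hD (Fin.tail c) (Fin.tail d)
        simp only [Fin.tail] at this
        refine this.trans ?_
        congr 1
        rw [eq_iff_iff]
        constructor
        · intro h
          ext1 i
          induction i using Fin.cases with
          | zero => exact h0
          | succ i => exact congrFun h i
        · rintro rfl; rfl
      · have : c ≠ d := fun h => h0 (by rw [h])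
        rw [Finsupp.single_eq_of_ne (by tauto)]
        simp [this]

theorem indep_of_dual {R N ι : Type} [CommRing R] [AddCommMonoid N] [Module R N] [Fintype ι]
    (f : ι → N) (D : ι → N →ₗ[R] R) (h : ∀ v w, D w (f v) = if v = w then 1 else 0) :
    LinearIndependent R f := by
  intro a b hab
  ext w
  have := congrArg (D w) hab
  simpa [Finsupp.linearCombination_apply, Finsupp.sum_fintype, h] using this

theorem indep_one {m : ℕ} : LinearIndependent A fun v : Equiv.Perm (Fin m) => xm 1 v := by
  obtain ⟨M, i1, i2, X, vac, D, h1, h2, h3, h4, hD⟩ :=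
    repr_exists qh qhi (by rw [qh, qhi, ← LaurentPolynomial.T_add, add_neg_cancel, LaurentPolynomial.T_zero]) (Fin m) m
  let φ0 : FreeAlgebra A (Fin m × Fin m) →ₐ[A] Module.End A M :=
    FreeAlgebra.lift A (fun a => X a.1 a.2)
  let φ : Qmb m →ₐ[A] Module.End A M := RingQuot.liftAlgHom A ⟨φ0, by
    intro a b h
    induction h with
    | r1 i k l h => ext x; simp [φ0, h1]
    | r2 i j k h => ext x; simp [φ0, h2 _ _ _ _ h]
    | r3 i j k l h h' => ext x; simp [φ0, h3 _ _ _ _ _ h h']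
    | r4 i j k l h h' => ext x; simp [φ0, h4 _ _ _ _ _ h h', sub_smul]⟩
  have hφ : ∀ i j, φ (Xg i j) = X i j := by
    intro i j
    simp [φ, Xg, φ0]
  have hφ2 : ∀ w : Equiv.Perm (Fin m), φ (xm 1 w) = (List.ofFn fun i => X i (w i)).prod := by
    intro w
    simp [xm, map_list_prod, List.map_ofFn, Function.comp_def, hφ]
  refine indep_of_dual _ (fun w => D w ∘ₗ LinearMap.applyₗ vac ∘ₗ φ.toLinearMap) ?_
  intro v w
  have h := hD v w
  rw [← hφ2] at h
  refine h.trans ?_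
  congr 1
  rw [eq_iff_iff]
  exact DFunLike.coe_fn_eq

theorem prod_step {S : Type} [Ring S] [Algebra A S] (c : A) {n : ℕ} (i : Fin n)
    (f g h : Fin (n + 1) → S)
    (hg : ∀ k, k ≠ i.castSucc → k ≠ i.succ → f k = g k)
    (hh : ∀ k, k ≠ i.castSucc → k ≠ i.succ → f k = h k)
    (e : f i.castSucc * f i.succ = g i.castSucc * g i.succ + c • (h i.castSucc * h i.succ)) :
    (List.ofFn f).prod = (List.ofFn g).prod + c • (List.ofFn h).prod := by
  induction n with
  | zero => exact i.elim0
  | succ n ih =>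
    induction i using Fin.cases with
    | zero =>
      have e1 : ∀ k : Fin n, f k.succ.succ = g k.succ.succ := fun k => hg _ (by simp) (by
        simp [Fin.ext_iff])
      have e2 : ∀ k : Fin n, f k.succ.succ = h k.succ.succ := fun k => hh _ (by simp) (by
        simp [Fin.ext_iff])
      simp only [List.ofFn_succ, List.prod_cons, ← mul_assoc]
      simp only [← e1, ← e2]
      simp only [Fin.castSucc_zero] at e
      rw [e, add_mul, smul_mul_assoc]
    | succ i =>
      have := ih i (fun k => f k.succ) (fun k => g k.succ) (fun k => h k.succ)
        (fun k a b => hg _ (by simpa [← Fin.succ_castSucc] using a) (by simpa using b))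
        (fun k a b => hh _ (by simpa [← Fin.succ_castSucc] using a) (by simpa using b))
        (by simpa [← Fin.succ_castSucc] using e)
      rw [List.ofFn_succ, List.ofFn_succ (f := g), List.ofFn_succ (f := h)]
      simp only [List.prod_cons]
      rw [this, mul_add, mul_smul_comm, hg 0, ← hh 0, hg 0] <;>
        simp [Fin.ext_iff]

theorem Xr3 {m : ℕ} (i j k l : Fin m) (hij : i < j) (hkl : k < l) :
    Xg j k * Xg i l = Xg i l * Xg j k := by
  have := RingQuot.mkAlgHom_rel A (QRel.r3 i j k l hij hkl)
  simpa [Xg] using this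

theorem Xr4 {m : ℕ} (i j k l : Fin m) (hij : i < j) (hkl : k < l) :
    Xg j l * Xg i k = Xg i k * Xg j l + (qh - qhi) • (Xg i l * Xg j k) := by
  have := RingQuot.mkAlgHom_rel A (QRel.r4 i j k l hij hkl)
  rw [Algebra.smul_def]
  simpa [Xg] using this

theorem xm_step_lt {n : ℕ} (u v : Equiv.Perm (Fin (n + 1))) (i : Fin n)
    (hu : u i.succ < u i.castSucc) (hv : v i.castSucc < v i.succ) :
    xm u v = xm (u * adjT i) (v * adjT i) := by
  have := prod_step (S := Qmb (n+1)) 0 i (fun k => Xg (u k) (v k))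
    (fun k => Xg ((u * adjT i) k) ((v * adjT i) k)) (fun k => Xg (u k) (v k))
    (fun k a b => by simp [adjT, Equiv.swap_apply_of_ne_of_ne a b]) (fun _ _ _ => rfl)
    (by simpa [adjT] using Xr3 _ _ _ _ hu hv)
  simpa [xm] using this

theorem xm_step_gt {n : ℕ} (u v : Equiv.Perm (Fin (n + 1))) (i : Fin n)
    (hu : u i.succ < u i.castSucc) (hv : v i.succ < v i.castSucc) :
    xm u v = xm (u * adjT i) (v * adjT i) + (qh - qhi) • xm (u * adjT i) v := by
  exact prod_step (S := Qmb (n+1)) (qh - qhi) i (fun k => Xg (u k) (v k))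
    (fun k => Xg ((u * adjT i) k) ((v * adjT i) k)) (fun k => Xg ((u * adjT i) k) (v k))
    (fun k a b => by simp [adjT, Equiv.swap_apply_of_ne_of_ne a b])
    (fun k a b => by simp [adjT, Equiv.swap_apply_of_ne_of_ne a b])
    (by simpa [adjT] using Xr4 _ _ _ _ hu hv)

theorem span_step {n : ℕ} (u : Equiv.Perm (Fin (n + 1))) (i : Fin n)
    (hu : u i.succ < u i.castSucc) :
    Submodule.span A (Set.range fun v : Equiv.Perm (Fin (n + 1)) => xm u v) =
      Submodule.span A (Set.range fun v : Equiv.Perm (Fin (n + 1)) => xm (u * adjT i) v) := by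
  have hss : ∀ v : Equiv.Perm (Fin (n + 1)), v * adjT i * adjT i = v := by
    intro v; simp [adjT, mul_assoc]
  have m1 : ∀ u v : Equiv.Perm (Fin (n + 1)), xm u v ∈
      Submodule.span A (Set.range fun v : Equiv.Perm (Fin (n + 1)) => xm u v) :=
    fun u v => Submodule.subset_span ⟨v, rfl⟩
  apply le_antisymm
  · rw [Submodule.span_le]
    rintro _ ⟨v, rfl⟩
    rcases lt_or_gt_of_ne (v.injective.ne (Fin.castSucc_lt_succ (i := i)).ne) with hv | hv
    · simp only [xm_step_lt u v i hu hv]; exact m1 _ _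
    · simp only [xm_step_gt u v i hu hv]
      exact add_mem (m1 _ _) (Submodule.smul_mem _ _ (m1 _ _))
  · have key : ∀ v : Equiv.Perm (Fin (n + 1)), v i.succ < v i.castSucc →
        xm (u * adjT i) v ∈ 
          Submodule.span A (Set.range fun v : Equiv.Perm (Fin (n + 1)) => xm u v) := by
      intro v hv
      have := xm_step_lt u (v * adjT i) i hu (by simpa [adjT] using hv)
      rw [hss] at this
      rw [← this]; exact m1 _ _
    rw [Submodule.span_le]
    rintro _ ⟨v, rfl⟩
    rcases lt_or_gt_of_ne (v.injective.ne (Fin.castSucc_lt_succ (i := i)).ne) with hv | hv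
    · have hv' : (v * adjT i) i.succ < (v * adjT i) i.castSucc := by simpa [adjT] using hv
      have := xm_step_gt u (v * adjT i) i hu hv'
      rw [hss] at this
      have e : xm (u * adjT i) v =
          xm u (v * adjT i) + (-(qh - qhi)) • xm (u * adjT i) (v * adjT i) := by
        rw [this, add_assoc, ← add_smul, add_neg_cancel, zero_smul, add_zero]
      simp only [e]
      exact add_mem (m1 _ _) (Submodule.smul_mem _ _ (key _ hv'))
    · exact key v hv

theorem span_eq_one {m : ℕ} (u : Equiv.Perm (Fin m)) :
    Submodule.span A (Set.range fun v : Equiv.Perm (Fin m) => xm u v) =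
      Submodule.span A (Set.range fun w : Equiv.Perm (Fin m) => xm 1 w) := by
  cases m with
  | zero => rw [Subsingleton.elim u 1]
  | succ n =>
    have hu : u ∈ Submonoid.closure
        (Set.range fun i : Fin n => Equiv.swap i.castSucc i.succ) := by
      rw [Equiv.Perm.mclosure_swap_castSucc_succ]; trivial
    induction hu using Submonoid.closure_induction_right with
    | one => rfl
    | mul_right x hx y hy ih =>
      obtain ⟨i, rfl⟩ := hy
      rw [← ih]
      change Submodule.span A (Set.range fun v : Equiv.Perm (Fin (n + 1)) => xm (x * adjT i) v) = _
      rcases lt_or_gt_of_ne (x.injective.ne (Fin.castSucc_lt_succ (i := i)).ne) with hv | hv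
      · have := span_step (x * adjT i) i (by simpa [adjT] using hv)
        rw [this]
        simp [adjT, mul_assoc]
      · exact (span_step x i hv).symm

theorem indep_of_span {R N ι : Type} [CommRing R] [AddCommGroup N] [Module R N] [Fintype ι]
    (f g : ι → N) (hf : LinearIndependent R f)
    (h : Submodule.span R (Set.range g) = Submodule.span R (Set.range f)) :
    LinearIndependent R g := by
  classical
  let b := Module.Basis.span hf
  let g' : ι → Submodule.span R (Set.range f) := fun i => ⟨g i, h ▸ Submodule.subset_span ⟨i, rfl⟩⟩
  let T := b.constr R g'
  have hT : Function.Surjective T := by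
    rw [← LinearMap.range_eq_top, Module.Basis.constr_range, eq_top_iff]
    rintro ⟨x, hx⟩ -
    rw [← h] at hx
    have : Submodule.map (Submodule.subtype _) (Submodule.span R (Set.range g')) =
        Submodule.span R (Set.range g) := by
      rw [Submodule.map_span, ← Set.range_comp]; rfl
    rw [← this] at hx
    obtain ⟨y, hy, rfl⟩ := hx
    exact hy
  have : Module.Finite R (Submodule.span R (Set.range f)) := Module.Finite.of_basis b
  have hi := OrzechProperty.injective_of_surjective_endomorphism T hT
  have h1 : LinearIndependent R (T ∘ b) := b.linearIndependent.map' T (LinearMap.ker_eq_bot.2 hi)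
  have h2 : T ∘ b = g' := by ext1 i; simp [T]
  rw [h2] at h1
  exact h1.map' (Submodule.subtype _) (Submodule.ker_subtype _)

theorem indep_of_span' {R N ι : Type} [CommRing R] [AddCommMonoid N] [Module R N] [Fintype ι]
    (f g : ι → N) (hf : LinearIndependent R f)
    (h : Submodule.span R (Set.range g) = Submodule.span R (Set.range f)) :
    LinearIndependent R g :=
  letI : AddCommGroup N := Module.addCommMonoidToAddCommGroup R
  indep_of_span f g hf h

/-- For each fixed `u`, the family `{x^{u,v} : v ∈ S_m}` is a basis of the
zero-weight space (the span of the monomials `x^{e,w}`) of the quantum matrix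
bialgebra, as a free `ℤ[q^{1/2},q^{-1/2}]`-module. -/
theorem xm_basis {m : ℕ} (u : Equiv.Perm (Fin m)) :
    (LinearIndependent A fun v : Equiv.Perm (Fin m) => xm u v) ∧
    Submodule.span A (Set.range fun v : Equiv.Perm (Fin m) => xm u v) =
      Submodule.span A (Set.range fun w : Equiv.Perm (Fin m) => xm 1 w) := by
  exact ⟨indep_of_span' _ _ indep_one (span_eq_one u), span_eq_one u⟩
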